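/- arXiv:1402.0792 — 2 statements merged into one kernel-verified Lean document; each statement's English description precedes it below -/
import Mathlib

section
/- Let A, B, C be bounded self-adjoint operators on an infinite-dimensional separable Hilbert space 𝓗 with σ(A), σ(B), σ(C) ⊆ [a,b], and let φ : [a,b]² → ℂ be a bounded measurable function. Then the operator ∫_A^B φ(x,C) dx, defined as ∫_a^b ( ∫_a^α φ(x,C) dx ) [E_B(dα) − E_A(dα)], exists as a bounded operator; here ∫_a^α φ(x,C) dx is a Bochner integral of the B(𝓗)-valued map x ↦ φ(x,C) = ∫_a^b φ(x,y) E_C(dy), and the outer integrals against E_A and E_B exist as operator-norm Riemann–Stieltjes integrals. -/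
open MeasureTheory Filter Topology

noncomputable section

/-- A projection-valued spectral measure for a bounded self-adjoint operator `A`
on a complex Hilbert space: projection-valued, multiplicative, countably additive in
the strong topology, and reproducing `A` via its moment: for every vector `x`,
`re ⟪x, A x⟫ = ∫ t dν_x(t)` where `ν_x(s) = ‖E s x‖²`. -/
structure SpectralMeasure {H : Type*} [NormedAddCommGroup H] [InnerProductSpace ℂ H]
    [CompleteSpace H] (A : H →L[ℂ] H) where
  E : Set ℝ → H →L[ℂ] H
  idem : ∀ s, E s * E s = E s
  selfadj : ∀ s, IsSelfAdjoint (E s)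
  empty : E ∅ = 0
  univ' : E Set.univ = 1
  inter : ∀ s t, E (s ∩ t) = E s * E t
  countably_additive : ∀ f : ℕ → Set ℝ, (∀ n, MeasurableSet (f n)) →
    Pairwise (Function.onFun Disjoint f) → ∀ x : H, HasSum (fun n => E (f n) x) (E (⋃ n, f n) x)
  ν : H → Measure ℝ
  ν_eq : ∀ (x : H) (s : Set ℝ), MeasurableSet s → ν x s = ENNReal.ofReal (‖E s x‖ ^ 2)
  moment : ∀ x : H, (inner ℂ x (A x) : ℂ).re = ∫ t, t ∂(ν x)

/-- `IsRSIntegral F μ a b L` : the operator-norm Riemann–Stieltjes sums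
`Σ_i F(ξ_i) μ((t_i, t_{i+1}])` of the operator-valued function `F` against the
(projection-valued) set function `μ`, over tagged partitions
`a = t_0 < t_1 < ... < t_n = b` with tags `ξ_i ∈ [t_i, t_{i+1}]`, converge in operator
norm to `L` as the mesh tends to `0`. -/
def IsRSIntegral {H : Type*} [NormedAddCommGroup H] [InnerProductSpace ℂ H] [CompleteSpace H]
    (F : ℝ → H →L[ℂ] H) (μ : Set ℝ → H →L[ℂ] H) (a b : ℝ) (L : H →L[ℂ] H) : Prop :=
  ∀ ε > (0 : ℝ), ∃ δ > (0 : ℝ), ∀ (n : ℕ) (t ξ : ℕ → ℝ),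
    0 < n → t 0 = a → t n = b →
    (∀ i < n, t i < t (i + 1) ∧ t (i + 1) - t i < δ ∧ ξ i ∈ Set.Icc (t i) (t (i + 1))) →
    ‖(∑ i ∈ Finset.range n, F (ξ i) * μ (Set.Ioc (t i) (t (i + 1)))) - L‖ < ε

section Helpers

variable {H : Type*} [NormedAddCommGroup H] [InnerProductSpace ℂ H] [CompleteSpace H]

lemma SpectralMeasure.nu_univ {A : H →L[ℂ] H} (S : SpectralMeasure A) (u : H) :
    S.ν u Set.univ = ENNReal.ofReal (‖u‖ ^ 2) := by
  rw [S.ν_eq u _ MeasurableSet.univ, S.univ']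
  simp

lemma SpectralMeasure.nu_finite {A : H →L[ℂ] H} (S : SpectralMeasure A) (u : H) :
    IsFiniteMeasure (S.ν u) := ⟨by rw [S.nu_univ]; exact ENNReal.ofReal_lt_top⟩

lemma SpectralMeasure.nu_real {A : H →L[ℂ] H} (S : SpectralMeasure A) (u : H) {s : Set ℝ}
    (hs : MeasurableSet s) : (S.ν u).real s = ‖S.E s u‖ ^ 2 := by
  rw [Measure.real, S.ν_eq u s hs, ENNReal.toReal_ofReal (by positivity)]

lemma SpectralMeasure.norm_mono {A : H →L[ℂ] H} (S : SpectralMeasure A) (u : H) {s t : Set ℝ}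
    (hs : MeasurableSet s) (ht : MeasurableSet t) (hst : s ⊆ t) : ‖S.E s u‖ ≤ ‖S.E t u‖ := by
  haveI := S.nu_finite u
  have h : (S.ν u).real s ≤ (S.ν u).real t := measureReal_mono hst
  rw [S.nu_real u hs, S.nu_real u ht] at h
  exact (sq_le_sq₀ (norm_nonneg _) (norm_nonneg _)).1 h

lemma SpectralMeasure.norm_le {A : H →L[ℂ] H} (S : SpectralMeasure A) (u : H) {s : Set ℝ}
    (hs : MeasurableSet s) : ‖S.E s u‖ ≤ ‖u‖ := by
  have h := S.norm_mono u hs MeasurableSet.univ (Set.subset_univ _)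
  rwa [S.univ', ContinuousLinearMap.one_apply] at h

lemma SpectralMeasure.add_apply {A : H →L[ℂ] H} (S : SpectralMeasure A) (u : H) {s t : Set ℝ}
    (hs : MeasurableSet s) (ht : MeasurableSet t) (hst : Disjoint s t) :
    S.E (s ∪ t) u = S.E s u + S.E t u := by
  let f : ℕ → Set ℝ := fun n => if n = 0 then s else if n = 1 then t else ∅
  have hf0 : f 0 = s := by simp [f]
  have hf1 : f 1 = t := by simp [f]
  have hf2 : ∀ n, n ≠ 0 → n ≠ 1 → f n = ∅ := by intro n h0 h1; simp [f, h0, h1]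
  have hU : (⋃ n, f n) = s ∪ t := by
    ext x
    simp only [Set.mem_iUnion, Set.mem_union]
    constructor
    · rintro ⟨n, hn⟩
      by_cases h0 : n = 0
      · subst h0; rw [hf0] at hn; exact Or.inl hn
      · by_cases h1 : n = 1
        · subst h1; rw [hf1] at hn; exact Or.inr hn
        · rw [hf2 n h0 h1] at hn; exact absurd hn (Set.notMem_empty x)
    · rintro (h | h)
      · exact ⟨0, by rwa [hf0]⟩
      · exact ⟨1, by rwa [hf1]⟩
  have hm : ∀ n, MeasurableSet (f n) := by
    intro n
    by_cases h0 : n = 0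
    · subst h0; rwa [hf0]
    · by_cases h1 : n = 1
      · subst h1; rwa [hf1]
      · rw [hf2 n h0 h1]; exact MeasurableSet.empty
  have hd : Pairwise (Function.onFun Disjoint f) := by
    intro i j hij
    simp only [Function.onFun]
    by_cases hi : i ≠ 0 ∧ i ≠ 1
    · rw [hf2 i hi.1 hi.2]; exact Set.empty_disjoint _
    by_cases hj : j ≠ 0 ∧ j ≠ 1
    · rw [hf2 j hj.1 hj.2]; exact Set.disjoint_empty _
    have : (i = 0 ∧ j = 1) ∨ (i = 1 ∧ j = 0) := by omega
    rcases this with ⟨rfl, rfl⟩ | ⟨rfl, rfl⟩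
    · rwa [hf0, hf1]
    · rw [hf0, hf1]; exact hst.symm
  have h1 := S.countably_additive f hm hd u
  rw [hU] at h1
  have h2 : HasSum (fun n => S.E (f n) u) (∑ n ∈ ({0, 1} : Finset ℕ), S.E (f n) u) := by
    apply hasSum_sum_of_ne_finset_zero
    intro n hn
    have : n ≠ 0 ∧ n ≠ 1 := by simpa using hn
    rw [hf2 n this.1 this.2, S.empty]; simp
  rw [h1.unique h2, Finset.sum_pair (by norm_num), hf0, hf1]

lemma SpectralMeasure.Iic_apply {A : H →L[ℂ] H} (S : SpectralMeasure A) (u : H) {x y : ℝ}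
    (hxy : x ≤ y) : S.E (Set.Iic y) u = S.E (Set.Iic x) u + S.E (Set.Ioc x y) u := by
  rw [← S.add_apply u measurableSet_Iic measurableSet_Ioc (Set.Iic_disjoint_Ioc le_rfl),
    Set.Iic_union_Ioc_eq_Iic hxy]

lemma SpectralMeasure.Iic_sq {A : H →L[ℂ] H} (S : SpectralMeasure A) (u : H) {x y : ℝ}
    (hxy : x ≤ y) : ‖S.E (Set.Ioc x y) u‖ ^ 2
      = ‖S.E (Set.Iic y) u‖ ^ 2 - ‖S.E (Set.Iic x) u‖ ^ 2 := by
  haveI := S.nu_finite u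
  rw [← S.nu_real u measurableSet_Iic, ← S.nu_real u measurableSet_Iic,
    ← S.nu_real u measurableSet_Ioc, ← Set.Iic_union_Ioc_eq_Iic hxy,
    measureReal_union (Set.Iic_disjoint_Ioc le_rfl) measurableSet_Ioc]
  ring

lemma SpectralMeasure.right_cont {A : H →L[ℂ] H} (S : SpectralMeasure A) (u : H) (x : ℝ) :
    Tendsto (fun y => S.E (Set.Iic y) u) (𝓝[>] x) (𝓝 (S.E (Set.Iic x) u)) := by
  haveI := S.nu_finite u
  have h := tendsto_measure_biInter_gt (μ := S.ν u) (s := fun y => Set.Ioc x y) (a := x)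
    (fun r _ => measurableSet_Ioc.nullMeasurableSet)
    (fun i j _ hij => Set.Ioc_subset_Ioc_right hij) ⟨x + 1, by simp, measure_ne_top _ _⟩
  have hI : (⋂ r > x, Set.Ioc x r) = (∅ : Set ℝ) := by
    ext z
    simp only [Set.mem_iInter, Set.mem_Ioc, Set.mem_empty_iff_false, iff_false]
    intro hz
    have h1 := (hz (x + 1) (by simp)).1
    have h2 := (hz ((x + z) / 2) (by simp only [gt_iff_lt]; linarith)).2
    linarith
  rw [hI, measure_empty] at h
  have h' := (ENNReal.tendsto_toReal ENNReal.zero_ne_top).comp h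
  have h3 : Tendsto (fun y => ‖S.E (Set.Ioc x y) u‖ ^ 2) (𝓝[>] x) (𝓝 0) := by
    refine h'.congr fun y => ?_
    exact S.nu_real u measurableSet_Ioc
  have h4 : Tendsto (fun y => ‖S.E (Set.Ioc x y) u‖) (𝓝[>] x) (𝓝 0) := by
    have := (Real.continuous_sqrt.tendsto 0).comp h3
    simpa [Function.comp_def, Real.sqrt_sq (norm_nonneg _)] using this
  have h5 := (tendsto_zero_iff_norm_tendsto_zero.2 h4).const_add (S.E (Set.Iic x) u)
  rw [add_zero] at h5
  refine h5.congr' ?_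
  filter_upwards [self_mem_nhdsWithin] with y hy
  exact (S.Iic_apply u (le_of_lt hy)).symm

lemma SpectralMeasure.Iic_meas {A : H →L[ℂ] H} (S : SpectralMeasure A) (u : H) :
    StronglyMeasurable (fun x => S.E (Set.Iic x) u) := by
  let y : ℕ → ℝ → ℝ := fun n x => ((⌊((n : ℝ) + 1) * x⌋ : ℝ) + 1) / ((n : ℝ) + 1)
  have hy1 : ∀ n x, x < y n x := by
    intro n x
    simp only [y]
    rw [lt_div_iff₀ (by positivity)]
    have := Int.lt_floor_add_one (((n : ℝ) + 1) * x)
    linarith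
  have hy2 : ∀ n x, y n x ≤ x + 1 / ((n : ℝ) + 1) := by
    intro n x
    simp only [y]
    rw [add_div]
    gcongr
    rw [div_le_iff₀ (by positivity)]
    have := Int.floor_le (((n : ℝ) + 1) * x)
    linarith
  have hyt : ∀ x, Tendsto (fun n => y n x) atTop (𝓝[>] x) := by
    intro x
    refine tendsto_nhdsWithin_iff.2 ⟨?_, Eventually.of_forall fun n => hy1 n x⟩
    refine tendsto_of_tendsto_of_tendsto_of_le_of_le tendsto_const_nhds ?_
      (fun n => (hy1 n x).le) (fun n => hy2 n x)
    simpa using (tendsto_one_div_add_atTop_nhds_zero_nat (𝕜 := ℝ)).const_add x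
  refine stronglyMeasurable_of_tendsto (u := atTop)
    (f := fun (n : ℕ) x => S.E (Set.Iic (y n x)) u) ?_ ?_
  · intro n
    have hfl : Measurable (fun x : ℝ => ⌊((n : ℝ) + 1) * x⌋) :=
      Int.measurable_floor.comp (measurable_const_mul _)
    have hg : StronglyMeasurable
        (fun k : ℤ => S.E (Set.Iic (((k : ℝ) + 1) / ((n : ℝ) + 1))) u) :=
      StronglyMeasurable.of_discrete
    exact hg.comp_measurable hfl
  · rw [tendsto_pi_nhds]
    intro x
    exact (S.right_cont u x).comp (hyt x)

lemma bdd_intervalIntegrable {G : Type*} [NormedAddCommGroup G] {f : ℝ → G}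
    (hf : StronglyMeasurable f) {K : ℝ} (hK : ∀ x, ‖f x‖ ≤ K) (a b : ℝ) :
    IntervalIntegrable f volume a b := by
  refine (intervalIntegrable_const (c := K)).mono_fun hf.aestronglyMeasurable ?_
  refine Eventually.of_forall fun x => ?_
  exact (hK x).trans (le_abs_self K)

lemma SpectralMeasure.rs_exists {A : H →L[ℂ] H} (S : SpectralMeasure A) (Φ : ℝ → H →L[ℂ] H)
    (hΦ : StronglyMeasurable Φ) {K : ℝ} (hK : ∀ x, ‖Φ x‖ ≤ K) {a b : ℝ} (hab : a ≤ b) :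
    ∃ L : H →L[ℂ] H, IsRSIntegral (fun α => ∫ x in a..α, Φ x) S.E a b L := by
  have hK0 : 0 ≤ K := (norm_nonneg _).trans (hK 0)
  have happ : ∀ g : ℝ → H, StronglyMeasurable g → StronglyMeasurable (fun x => Φ x (g x)) :=
    fun g hg => (isBoundedBilinearMap_apply (𝕜 := ℂ) (E := H) (F := H)).continuous
      |>.comp_stronglyMeasurable (hΦ.prodMk hg)
  have hbd : ∀ x (v : H), ‖Φ x v‖ ≤ K * ‖v‖ := fun x v => (Φ x).le_of_opNorm_le (hK x) v
  have hint : ∀ s t, IntervalIntegrable Φ volume s t := bdd_intervalIntegrable hΦ hK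
  have hinte : ∀ (u : H) s t,
      IntervalIntegrable (fun x => Φ x (S.E (Set.Iic x) u)) volume s t := fun u =>
    bdd_intervalIntegrable (K := K * ‖u‖) (happ _ (S.Iic_meas u)) fun x =>
      (hbd x _).trans (by gcongr; exact S.norm_le u measurableSet_Iic)
  have hintc : ∀ (u : H) s t, IntervalIntegrable (fun x => Φ x u) volume s t := fun u =>
    bdd_intervalIntegrable (K := K * ‖u‖) (happ _ stronglyMeasurable_const) fun x => hbd x _
  let J : H →L[ℂ] H := LinearMap.mkContinuous
    { toFun := fun u => ∫ x in a..b, Φ x (S.E (Set.Iic x) u)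
      map_add' := fun u v => by
        simp only [map_add]
        exact intervalIntegral.integral_add (hinte u a b) (hinte v a b)
      map_smul' := fun c u => by
        simp only [map_smul, RingHom.id_apply]
        exact intervalIntegral.integral_smul c _ } (K * (b - a)) (by
      intro u
      have := intervalIntegral.norm_integral_le_of_norm_le_const (a := a) (b := b)
        (C := K * ‖u‖) (f := fun x => Φ x (S.E (Set.Iic x) u)) (fun x _ =>
          (hbd x _).trans (by gcongr; exact S.norm_le u measurableSet_Iic))
      rw [abs_of_nonneg (by linarith)] at this
      simp only [LinearMap.coe_mk, AddHom.coe_mk]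
      linarith)
  have hJ : ∀ u, J u = ∫ x in a..b, Φ x (S.E (Set.Iic x) u) := fun u => rfl
  set F : ℝ → H →L[ℂ] H := fun α => ∫ x in a..α, Φ x with hF
  have hFa : F a = 0 := by simp [hF]
  have hFsub : ∀ s t, F t - F s = ∫ x in s..t, Φ x := fun s t =>
    intervalIntegral.integral_interval_sub_left (hint _ _) (hint _ _)
  -- the estimate on a single cell
  have hcell : ∀ (u : H) (s t ξ : ℝ), s ≤ t → ξ ∈ Set.Icc s t →
      ‖F ξ (S.E (Set.Ioc s t) u) - (F t (S.E (Set.Iic t) u) - F s (S.E (Set.Iic s) u)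
        - ∫ x in s..t, Φ x (S.E (Set.Iic x) u))‖
      ≤ 2 * K * (t - s) * ‖S.E (Set.Ioc s t) u‖ := by
    intro u s t ξ hst hξ
    have e1 : (F t - F s) (S.E (Set.Iic t) u) = ∫ x in s..t, Φ x (S.E (Set.Iic t) u) := by
      rw [hFsub]
      exact ContinuousLinearMap.intervalIntegral_apply (hint s t) _
    have e2 : (∫ x in s..t, Φ x (S.E (Set.Iic t) u)) - ∫ x in s..t, Φ x (S.E (Set.Iic x) u)
        = ∫ x in s..t, (Φ x (S.E (Set.Iic t) u) - Φ x (S.E (Set.Iic x) u)) :=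
      (intervalIntegral.integral_sub (hintc _ s t) (hinte u s t)).symm
    have e3 : S.E (Set.Iic t) u = S.E (Set.Iic s) u + S.E (Set.Ioc s t) u := S.Iic_apply u hst
    have e4 : F ξ (S.E (Set.Ioc s t) u) - (F t (S.E (Set.Iic t) u) - F s (S.E (Set.Iic s) u)
        - ∫ x in s..t, Φ x (S.E (Set.Iic x) u))
        = (F ξ - F s) (S.E (Set.Ioc s t) u)
          - ∫ x in s..t, (Φ x (S.E (Set.Iic t) u) - Φ x (S.E (Set.Iic x) u)) := by
      rw [← e2, ← e1]
      have e5 : F s (S.E (Set.Iic t) u) = F s (S.E (Set.Iic s) u) + F s (S.E (Set.Ioc s t) u) := by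
        rw [e3, map_add]
      simp only [ContinuousLinearMap.sub_apply]
      rw [e5]
      abel
    rw [e4]
    have b1 : ‖(F ξ - F s) (S.E (Set.Ioc s t) u)‖ ≤ K * (t - s) * ‖S.E (Set.Ioc s t) u‖ := by
      apply ContinuousLinearMap.le_of_opNorm_le
      rw [hFsub]
      refine (intervalIntegral.norm_integral_le_of_norm_le_const (C := K)
        (fun x _ => hK x)).trans ?_
      rw [abs_of_nonneg (by linarith [hξ.1])]
      gcongr
      exact hξ.2
    have b2 : ‖∫ x in s..t, (Φ x (S.E (Set.Iic t) u) - Φ x (S.E (Set.Iic x) u))‖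
        ≤ K * ‖S.E (Set.Ioc s t) u‖ * |t - s| := by
      apply intervalIntegral.norm_integral_le_of_norm_le_const
      intro x hx
      rw [Set.uIoc_of_le hst] at hx
      rw [← map_sub, S.Iic_apply u hx.2, add_sub_cancel_left]
      refine (hbd x _).trans ?_
      gcongr
      exact S.norm_mono u measurableSet_Ioc measurableSet_Ioc
        (Set.Ioc_subset_Ioc_left hx.1.le)
    rw [abs_of_nonneg (by linarith)] at b2
    refine (norm_sub_le _ _).trans ?_
    linarith
  refine ⟨F b * S.E (Set.Iic b) - J, ?_⟩
  intro ε hε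
  -- choose the mesh
  have hc : 0 < (2 * K + 1) ^ 2 * (b - a + 1) := by
    have : 0 < b - a + 1 := by linarith
    positivity
  refine ⟨(ε / 2) ^ 2 / ((2 * K + 1) ^ 2 * (b - a + 1)), by positivity, ?_⟩
  set δ := (ε / 2) ^ 2 / ((2 * K + 1) ^ 2 * (b - a + 1)) with hδ
  have hδ0 : 0 < δ := by positivity
  intro n t ξ hn ht0 htn hp
  have key : ‖(∑ i ∈ Finset.range n, F (ξ i) * S.E (Set.Ioc (t i) (t (i + 1))))
      - (F b * S.E (Set.Iic b) - J)‖ ≤ ε / 2 := by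
    refine ContinuousLinearMap.opNorm_le_bound _ (by positivity) fun u => ?_
    have hL : (F b * S.E (Set.Iic b) - J) u = ∑ i ∈ Finset.range n,
        (F (t (i + 1)) (S.E (Set.Iic (t (i + 1))) u) - F (t i) (S.E (Set.Iic (t i)) u)
        - ∫ x in (t i)..(t (i + 1)), Φ x (S.E (Set.Iic x) u)) := by
      rw [Finset.sum_sub_distrib,
        Finset.sum_range_sub (fun i => F (t i) (S.E (Set.Iic (t i)) u)),
        intervalIntegral.sum_integral_adjacent_intervals (fun k _ => hinte u _ _),
        ht0, htn, hFa, ContinuousLinearMap.sub_apply, hJ]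
      simp
    have hsum : ((∑ i ∈ Finset.range n, F (ξ i) * S.E (Set.Ioc (t i) (t (i + 1))))
        - (F b * S.E (Set.Iic b) - J)) u = ∑ i ∈ Finset.range n,
        (F (ξ i) (S.E (Set.Ioc (t i) (t (i + 1))) u)
          - (F (t (i + 1)) (S.E (Set.Iic (t (i + 1))) u) - F (t i) (S.E (Set.Iic (t i)) u)
        - ∫ x in (t i)..(t (i + 1)), Φ x (S.E (Set.Iic x) u))) := by
      rw [ContinuousLinearMap.sub_apply, hL, Finset.sum_sub_distrib (s := Finset.range n)
        (f := fun i => F (ξ i) (S.E (Set.Ioc (t i) (t (i + 1))) u))]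
      congr 1
      rw [ContinuousLinearMap.sum_apply]
      rfl
    rw [hsum]
    set w : ℕ → ℝ := fun i => ‖S.E (Set.Ioc (t i) (t (i + 1))) u‖ with hw
    have h1 : ∀ i ∈ Finset.range n, ‖F (ξ i) (S.E (Set.Ioc (t i) (t (i + 1))) u)
          - (F (t (i + 1)) (S.E (Set.Iic (t (i + 1))) u) - F (t i) (S.E (Set.Iic (t i)) u)
        - ∫ x in (t i)..(t (i + 1)), Φ x (S.E (Set.Iic x) u))‖
        ≤ 2 * K * (t (i + 1) - t i) * w i := fun i hi =>
      hcell u _ _ _ (hp i (Finset.mem_range.1 hi)).1.le (hp i (Finset.mem_range.1 hi)).2.2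
    refine (norm_sum_le_of_le _ h1).trans ?_
    have hw2 : ∑ i ∈ Finset.range n, w i ^ 2 ≤ ‖u‖ ^ 2 := by
      have : ∑ i ∈ Finset.range n, w i ^ 2 = ∑ i ∈ Finset.range n,
          (‖S.E (Set.Iic (t (i + 1))) u‖ ^ 2 - ‖S.E (Set.Iic (t i)) u‖ ^ 2) :=
        Finset.sum_congr rfl fun i hi => S.Iic_sq u (hp i (Finset.mem_range.1 hi)).1.le
      rw [this, Finset.sum_range_sub (fun i => ‖S.E (Set.Iic (t i)) u‖ ^ 2)]
      have h2 : ‖S.E (Set.Iic (t n)) u‖ ^ 2 ≤ ‖u‖ ^ 2 := by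
        gcongr
        exact S.norm_le u measurableSet_Iic
      linarith [sq_nonneg ‖S.E (Set.Iic (t 0)) u‖]
    have hd2 : ∑ i ∈ Finset.range n, (2 * K * (t (i + 1) - t i)) ^ 2
        ≤ (2 * K + 1) ^ 2 * (b - a + 1) * δ := by
      calc ∑ i ∈ Finset.range n, (2 * K * (t (i + 1) - t i)) ^ 2
          ≤ ∑ i ∈ Finset.range n, (2 * K) ^ 2 * δ * (t (i + 1) - t i) := by
            refine Finset.sum_le_sum fun i hi => ?_
            obtain ⟨p1, p2, -⟩ := hp i (Finset.mem_range.1 hi)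
            have : (t (i + 1) - t i) ^ 2 ≤ δ * (t (i + 1) - t i) := by
              rw [sq]; exact mul_le_mul_of_nonneg_right p2.le (by linarith)
            rw [mul_pow, mul_assoc]
            gcongr
        _ = (2 * K) ^ 2 * δ * (b - a) := by
            rw [← Finset.mul_sum, Finset.sum_range_sub, ht0, htn]
        _ ≤ (2 * K + 1) ^ 2 * δ * (b - a + 1) := by
            gcongr <;> linarith
        _ = _ := by ring
    have hδe : (2 * K + 1) ^ 2 * (b - a + 1) * δ = (ε / 2) ^ 2 := by
      rw [hδ]; exact mul_div_cancel₀ _ hc.ne'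
    rw [hδe] at hd2
    have hcs := Finset.sum_mul_sq_le_sq_mul_sq (Finset.range n)
      (fun i => 2 * K * (t (i + 1) - t i)) w
    have hfin : (∑ i ∈ Finset.range n, 2 * K * (t (i + 1) - t i) * w i) ^ 2
        ≤ (ε / 2 * ‖u‖) ^ 2 := by
      rw [mul_pow]
      refine hcs.trans ?_
      exact mul_le_mul hd2 hw2 (Finset.sum_nonneg fun i _ => sq_nonneg _) (sq_nonneg _)
    exact le_of_sq_le_sq hfin (by positivity)
  linarith

lemma opNorm_le_of_numerical (T : H →L[ℂ] H) {M : ℝ} (hM : 0 ≤ M)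
    (h : ∀ u : H, ‖inner ℂ u (T u)‖ ≤ M * ‖u‖ ^ 2) : ‖T‖ ≤ 2 * M := by
  have hq : ∀ u : H, ‖inner ℂ (T u) u‖ ≤ M * ‖u‖ ^ 2 := fun u => by
    rw [norm_inner_symm]; exact h u
  have hbil : ∀ x y : H, ‖inner ℂ (T y) x‖ ≤ M * (‖x‖ ^ 2 + ‖y‖ ^ 2) := by
    intro x y
    have hp := inner_map_polarization (T : H →ₗ[ℂ] H) x y
    simp only [ContinuousLinearMap.coe_coe] at hp
    rw [hp, norm_div]
    have p1 := parallelogram_law_with_norm ℂ x y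
    have p2 := parallelogram_law_with_norm ℂ x (Complex.I • y)
    have hI : ‖Complex.I • y‖ = ‖y‖ := by rw [norm_smul]; simp
    rw [hI] at p2
    have q1 := hq (x + y)
    have q2 := hq (x - y)
    have q3 := hq (x + Complex.I • y)
    have q4 := hq (x - Complex.I • y)
    have n4 : ‖(4 : ℂ)‖ = 4 := by norm_num
    rw [n4, div_le_iff₀ (by norm_num)]
    refine (norm_sub_le _ _).trans ?_
    refine (add_le_add_left ((norm_add_le _ _).trans
      (add_le_add_left (norm_sub_le _ _) _)) _).trans ?_
    rw [norm_mul, norm_mul, Complex.norm_I, one_mul, one_mul]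
    have p3 : M * (‖x + y‖ ^ 2 + ‖x - y‖ ^ 2) = M * (2 * (‖x‖ ^ 2 + ‖y‖ ^ 2)) := by
      rw [← p1]
    have p4 : M * (‖x + Complex.I • y‖ ^ 2 + ‖x - Complex.I • y‖ ^ 2)
        = M * (2 * (‖x‖ ^ 2 + ‖y‖ ^ 2)) := by
      rw [← p2]
    linarith
  refine ContinuousLinearMap.opNorm_le_of_unit_norm (by positivity) fun y hy => ?_
  by_cases h0 : ‖T y‖ = 0
  · rw [h0]; positivity
  have h0' : 0 < ‖T y‖ := lt_of_le_of_ne (norm_nonneg _) (Ne.symm h0)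
  have hb := hbil (((‖T y‖⁻¹ : ℝ) : ℂ) • T y) y
  rw [inner_smul_right, norm_mul, norm_smul, hy, inner_self_eq_norm_sq_to_K] at hb
  simp only [Complex.norm_real, norm_inv, norm_norm, norm_pow, Complex.coe_algebraMap] at hb
  rw [inv_mul_cancel₀ h0, sq, inv_mul_cancel_left₀ h0] at hb
  linarith

lemma IsRSIntegral.sub {F : ℝ → H →L[ℂ] H} {μ ν : Set ℝ → H →L[ℂ] H} {a b : ℝ}
    {L L' : H →L[ℂ] H} (h : IsRSIntegral F μ a b L) (h' : IsRSIntegral F ν a b L') :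
    IsRSIntegral F (fun s => μ s - ν s) a b (L - L') := by
  intro ε hε
  obtain ⟨δ, hδ, h⟩ := h (ε / 2) (by positivity)
  obtain ⟨δ', hδ', h'⟩ := h' (ε / 2) (by positivity)
  refine ⟨min δ δ', lt_min hδ hδ', fun n t ξ hn h0 hn' hp => ?_⟩
  have k1 := h n t ξ hn h0 hn' fun i hi =>
    ⟨(hp i hi).1, (hp i hi).2.1.trans_le (min_le_left _ _), (hp i hi).2.2⟩
  have k2 := h' n t ξ hn h0 hn' fun i hi =>
    ⟨(hp i hi).1, (hp i hi).2.1.trans_le (min_le_right _ _), (hp i hi).2.2⟩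
  simp only [mul_sub, Finset.sum_sub_distrib]
  rw [sub_sub_sub_comm]
  refine (norm_sub_le _ _).trans_lt ?_
  linarith

end Helpers

/-- Let `A`, `B`, `C` be bounded self-adjoint operators with spectra in
`[a,b]` and let `φ : [a,b]² → ℂ` be bounded and measurable.  Let `Φ x = φ(x, C)` be the
bounded operator obtained by applying `φ(x, ·)` to `C` via the (Borel) functional
calculus, characterized by `⟪u, Φ x u⟫ = ∫ φ(x,y) dν_u(y)` with `ν_u(s) = ‖E_C(s)u‖²`.
Then `∫_A^B φ(x,C) dx := ∫_a^b (∫_a^α φ(x,C) dx) [E_B(dα) − E_A(dα)]` exists as a bounded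
operator: the inner integrals exist as Bochner integrals and the outer integral exists as
an operator-norm Riemann–Stieltjes integral. -/
theorem stmt8 {H : Type*} [NormedAddCommGroup H] [InnerProductSpace ℂ H] [CompleteSpace H]
    [TopologicalSpace.SeparableSpace H] (hinf : ¬ FiniteDimensional ℂ H)
    (a b : ℝ) (hab : a ≤ b)
    (A B C : H →L[ℂ] H)
    (hA : IsSelfAdjoint A) (hB : IsSelfAdjoint B) (hC : IsSelfAdjoint C)
    (EA : SpectralMeasure A) (EB : SpectralMeasure B) (EC : SpectralMeasure C)
    (hAspec : EA.E (Set.Icc a b) = 1) (hBspec : EB.E (Set.Icc a b) = 1)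
    (hCspec : EC.E (Set.Icc a b) = 1)
    (φ : ℝ → ℝ → ℂ) (hφmeas : Measurable (Function.uncurry φ))
    (M : ℝ) (hφbdd : ∀ x y, ‖φ x y‖ ≤ M)
    (Φ : ℝ → H →L[ℂ] H) (hΦmeas : StronglyMeasurable Φ)
    (hΦ : ∀ (x : ℝ) (u : H), (inner ℂ u (Φ x u) : ℂ) = ∫ y, φ x y ∂(EC.ν u)) :
    (∀ α ∈ Set.Icc a b, IntervalIntegrable Φ volume a α) ∧
    ∃ L : H →L[ℂ] H,
      IsRSIntegral (fun α => ∫ x in a..α, Φ x) (fun s => EB.E s - EA.E s) a b L := by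
  have hM : 0 ≤ M := (norm_nonneg _).trans (hφbdd 0 0)
  have hK : ∀ x, ‖Φ x‖ ≤ 2 * M := by
    intro x
    refine opNorm_le_of_numerical (Φ x) hM fun u => ?_
    rw [hΦ x u]
    haveI := EC.nu_finite u
    refine (norm_integral_le_of_norm_le_const (Eventually.of_forall fun y => hφbdd x y)).trans ?_
    rw [EC.nu_real u MeasurableSet.univ, EC.univ', ContinuousLinearMap.one_apply]
  refine ⟨fun α _ => bdd_intervalIntegrable hΦmeas hK a α, ?_⟩
  obtain ⟨LA, hLA⟩ := EA.rs_exists Φ hΦmeas hK hab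
  obtain ⟨LB, hLB⟩ := EB.rs_exists Φ hΦmeas hK hab
  exact ⟨LB - LA, hLB.sub hLA⟩

end
end

section
/- Under the same hypotheses (commuting pairs (H₁⁰,H₂⁰), (H₁,H₂) with H_j − H_j⁰ ∈ B₂(𝓗), and finite-dimensional approximants and projections from the Weyl–von Neumann–Berg construction), for j = 1,2 and every integer k ≥ 1 the quantities ‖P_N⁰[(P_N⁰ H_j⁰ P_N⁰)^k − (P_N H_j P_N)^k] P_N‖₂ are uniformly bounded in N. -/
open MeasureTheory Filter Topology

noncomputable section

/-- The trace computed along a Hilbert basis: `Tr T = Σ_i ⟪b i, T (b i)⟫`. -/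
def traceAlong {H : Type*} [NormedAddCommGroup H] [InnerProductSpace ℂ H] [CompleteSpace H]
    {ι : Type*} (b : HilbertBasis ι ℂ H) (T : H →L[ℂ] H) : ℂ :=
  ∑' i, (inner ℂ (b i) (T (b i)) : ℂ)

/-- The Schatten `p`-norm `‖T‖_p = (Tr |T|^p)^{1/p}`, via the functional calculus
`|T|^p = f(T*T)`, `f(t) = |t|^{p/2}`, with the trace computed along the basis `b`. -/
def schattenNorm {H : Type*} [NormedAddCommGroup H] [InnerProductSpace ℂ H] [CompleteSpace H]
    {ι : Type*} (b : HilbertBasis ι ℂ H) (p : ℝ) (T : H →L[ℂ] H) : ℝ :=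
  (∑' i, (inner ℂ (b i)
      ((cfc (fun t : ℝ => |t| ^ (p / 2)) (ContinuousLinearMap.adjoint T * T)) (b i)) : ℂ).re)
    ^ (1 / p)

section helpers

open scoped ENNReal NNReal

variable {H : Type*} [NormedAddCommGroup H] [InnerProductSpace ℂ H] [CompleteSpace H]

/-- Squared Hilbert–Schmidt norm in `ℝ≥0∞`. -/
def hsq (b : HilbertBasis ℕ ℂ H) (T : H →L[ℂ] H) : ℝ≥0∞ := ∑' i, ‖T (b i)‖ₑ ^ 2

theorem parseval_enn (b : HilbertBasis ℕ ℂ H) (x : H) :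
    ∑' i, ‖inner ℂ (b i) x‖ₑ ^ 2 = ‖x‖ₑ ^ 2 := by
  have h := b.hasSum_inner_mul_inner x x
  have h2 : HasSum (fun i => ‖inner ℂ (b i) x‖ ^ 2) (‖x‖ ^ 2) := by
    have h3 := (Complex.reCLM.hasSum h)
    have e : (Complex.reCLM (inner ℂ x x)) = ‖x‖ ^ 2 := by
      have := inner_self_eq_norm_sq (𝕜 := ℂ) x
      simpa using this
    rw [e] at h3
    have e2 : (fun i => ‖inner ℂ (b i) x‖ ^ 2) =
        fun i => Complex.reCLM (inner ℂ x (b i) * inner ℂ (b i) x) := by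
      funext i
      have h4 := inner_mul_symm_re_eq_norm (𝕜 := ℂ) x (b i)
      rw [norm_mul, norm_inner_symm x (b i), ← sq] at h4
      exact h4.symm
    rw [e2]
    exact h3
  have e1 : ∀ y : ℝ, 0 ≤ y → ENNReal.ofReal (y ^ 2) = (ENNReal.ofReal y) ^ 2 := by
    intro y hy
    exact ENNReal.ofReal_pow hy 2
  simp_rw [← ofReal_norm]
  rw [← e1 _ (norm_nonneg _), ← h2.tsum_eq,
    ENNReal.ofReal_tsum_of_nonneg (fun _ => by positivity) h2.summable]
  exact tsum_congr fun i => (e1 _ (norm_nonneg _)).symm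

theorem hsq_adjoint (b : HilbertBasis ℕ ℂ H) (T : H →L[ℂ] H) :
    hsq b (ContinuousLinearMap.adjoint T) = hsq b T := by
  unfold hsq
  simp_rw [← parseval_enn b]
  rw [ENNReal.tsum_comm]
  refine tsum_congr fun i => tsum_congr fun j => ?_
  rw [ContinuousLinearMap.adjoint_inner_right, ← ofReal_norm, ← ofReal_norm,
    norm_inner_symm]

theorem hsq_mul_left (b : HilbertBasis ℕ ℂ H) (A T : H →L[ℂ] H) :
    hsq b (A * T) ≤ ‖A‖ₑ ^ 2 * hsq b T := by
  unfold hsq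
  rw [← ENNReal.tsum_mul_left]
  refine ENNReal.tsum_le_tsum fun i => ?_
  rw [← mul_pow]
  gcongr
  exact A.le_opENorm (T (b i))

theorem hsq_mul_right (b : HilbertBasis ℕ ℂ H) (T A : H →L[ℂ] H) :
    hsq b (T * A) ≤ ‖A‖ₑ ^ 2 * hsq b T := by
  rw [← hsq_adjoint b (T * A), ← hsq_adjoint b T]
  have : ContinuousLinearMap.adjoint (T * A) =
    ContinuousLinearMap.adjoint A * ContinuousLinearMap.adjoint T :=
      ContinuousLinearMap.adjoint_comp T A
  rw [this]
  have e : ‖ContinuousLinearMap.adjoint A‖ₑ = ‖A‖ₑ := by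
    rw [← ofReal_norm, ← ofReal_norm, LinearIsometryEquiv.norm_map]
  rw [← e]
  exact hsq_mul_left b _ _

theorem hsq_add (b : HilbertBasis ℕ ℂ H) (S T : H →L[ℂ] H) :
    hsq b (S + T) ≤ 2 * (hsq b S + hsq b T) := by
  unfold hsq
  rw [← ENNReal.tsum_add, ← ENNReal.tsum_mul_left]
  refine ENNReal.tsum_le_tsum fun i => ?_
  calc ‖(S + T) (b i)‖ₑ ^ 2 ≤ (‖S (b i)‖ₑ + ‖T (b i)‖ₑ) ^ 2 := by
        gcongr; exact enorm_add_le _ _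
    _ ≤ _ := by
        have := ENNReal.rpow_add_le_mul_rpow_add_rpow ‖S (b i)‖ₑ ‖T (b i)‖ₑ (p := 2) (by norm_num)
        norm_num at this
        exact_mod_cast this

theorem hsq_neg (b : HilbertBasis ℕ ℂ H) (T : H →L[ℂ] H) : hsq b (-T) = hsq b T := by
  simp [hsq]

theorem schatten_two (b : HilbertBasis ℕ ℂ H) (T : H →L[ℂ] H) :
    schattenNorm b 2 T = Real.sqrt (hsq b T).toReal := by
  unfold schattenNorm
  have hpos : 0 ≤ ContinuousLinearMap.adjoint T * T := star_mul_self_nonneg T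
  have hc : cfc (fun t : ℝ => |t| ^ ((2:ℝ) / 2)) (ContinuousLinearMap.adjoint T * T)
      = ContinuousLinearMap.adjoint T * T := by
    conv_rhs => rw [← cfc_id' ℝ (ContinuousLinearMap.adjoint T * T)
      (IsSelfAdjoint.of_nonneg hpos)]
    refine cfc_congr fun t ht => ?_
    have := spectrum_nonneg_of_nonneg hpos ht
    simp [abs_of_nonneg this]
  rw [hc, Real.sqrt_eq_rpow]
  congr 1
  unfold hsq
  rw [ENNReal.tsum_toReal_eq (fun i => by finiteness)]
  refine tsum_congr fun i => ?_
  rw [ContinuousLinearMap.mul_apply, ContinuousLinearMap.adjoint_inner_right]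
  have := inner_self_eq_norm_sq (𝕜 := ℂ) (T (b i))
  simpa using this

theorem hsq_proj (b : HilbertBasis ℕ ℂ H) (P : H →L[ℂ] H) (hsa : IsSelfAdjoint P)
    (hf : FiniteDimensional ℂ (LinearMap.range (P : H →ₗ[ℂ] H))) : hsq b P ≠ ∞ := by
  let e := stdOrthonormalBasis ℂ (LinearMap.range (P : H →ₗ[ℂ] H))
  have h : ∀ x, ‖P x‖ₑ ^ 2 = ∑ j, ‖inner ℂ x (P (e j))‖ₑ ^ 2 := by
    intro x
    have h1 := e.sum_sq_norm_inner_right ⟨P x, ⟨x, rfl⟩⟩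
    have h2 : ‖P x‖ ^ 2 = ∑ j, ‖inner ℂ x (P (e j))‖ ^ 2 := by
      have h3 : ‖P x‖ ^ 2 = ∑ j, ‖inner ℂ (e j : H) (P x)‖ ^ 2 := by
        simpa using h1.symm
      rw [h3]
      refine Finset.sum_congr rfl fun j _ => ?_
      rw [norm_inner_symm]
      congr 2
      rw [← ContinuousLinearMap.adjoint_inner_right, hsa.adjoint_eq]
    simp_rw [← ofReal_norm, ← ENNReal.ofReal_pow (norm_nonneg _)]
    rw [h2, ENNReal.ofReal_sum_of_nonneg (fun _ _ => by positivity)]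
  unfold hsq
  simp_rw [h]
  rw [Summable.tsum_finsetSum (fun _ _ => ENNReal.summable)]
  refine ENNReal.sum_ne_top.2 fun j _ => ?_
  rw [parseval_enn]
  finiteness

/-- Uniformly bounded Hilbert–Schmidt norms. -/
def HSB (b : HilbertBasis ℕ ℂ H) (T : ℕ → H →L[ℂ] H) : Prop :=
  ∃ C : ℝ≥0, ∀ N, hsq b (T N) ≤ C

theorem HSB.add {b : HilbertBasis ℕ ℂ H} {S T : ℕ → H →L[ℂ] H} (hS : HSB b S) (hT : HSB b T) :
    HSB b (fun N => S N + T N) := by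
  obtain ⟨C, hC⟩ := hS
  obtain ⟨D, hD⟩ := hT
  refine ⟨2 * (C + D), fun N => (hsq_add b _ _).trans ?_⟩
  push_cast
  gcongr
  exacts [hC N, hD N]

theorem HSB.mul_left {b : HilbertBasis ℕ ℂ H} {A T : ℕ → H →L[ℂ] H} {M : ℝ≥0}
    (hA : ∀ N, ‖A N‖₊ ≤ M) (hT : HSB b T) : HSB b (fun N => A N * T N) := by
  obtain ⟨C, hC⟩ := hT
  refine ⟨M ^ 2 * C, fun N => (hsq_mul_left b _ _).trans ?_⟩
  push_cast
  gcongr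
  exacts [by simpa [enorm] using hA N, hC N]

theorem HSB.mul_right {b : HilbertBasis ℕ ℂ H} {A T : ℕ → H →L[ℂ] H} {M : ℝ≥0}
    (hA : ∀ N, ‖A N‖₊ ≤ M) (hT : HSB b T) : HSB b (fun N => T N * A N) := by
  obtain ⟨C, hC⟩ := hT
  refine ⟨M ^ 2 * C, fun N => (hsq_mul_right b _ _).trans ?_⟩
  push_cast
  gcongr
  exacts [by simpa [enorm] using hA N, hC N]

theorem HSB.comm {b : HilbertBasis ℕ ℂ H} {A : H →L[ℂ] H} {P : ℕ → H →L[ℂ] H}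
    (hsa : ∀ N, IsSelfAdjoint (P N))
    (hf : ∀ N, FiniteDimensional ℂ (LinearMap.range (P N : H →ₗ[ℂ] H)))
    (hlim : Tendsto (fun N => schattenNorm b 2 (A * P N - P N * A)) atTop (𝓝 0)) :
    HSB b (fun N => A * P N - P N * A) := by
  obtain ⟨C, hC⟩ := hlim.bddAbove_range
  refine ⟨(C ^ 2).toNNReal, fun N => ?_⟩
  have h1 : hsq b (A * P N - P N * A) ≠ ∞ := by
    rw [sub_eq_add_neg]
    refine ne_top_of_le_ne_top ?_ (hsq_add b _ _)
    rw [hsq_neg]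
    have hp := hsq_proj b (P N) (hsa N) (hf N)
    have i1 := ne_top_of_le_ne_top (by finiteness) (hsq_mul_left b A (P N))
    have i2 := ne_top_of_le_ne_top (by finiteness) (hsq_mul_right b (P N) A)
    finiteness
  have h2 : schattenNorm b 2 (A * P N - P N * A) ≤ C := hC ⟨N, rfl⟩
  rw [schatten_two] at h2
  show hsq b (A * P N - P N * A) ≤ ENNReal.ofReal (C ^ 2)
  rw [← ENNReal.ofReal_toReal h1]
  exact ENNReal.ofReal_le_ofReal (Real.sqrt_le_left (le_trans (Real.sqrt_nonneg _) h2) |>.1 h2)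

theorem proj_norm {P : H →L[ℂ] H} (hp : P * P = P) (hsa : IsSelfAdjoint P) : ‖P‖₊ ≤ 1 := by
  have h : ‖P‖ * ‖P‖ = ‖P‖ := by
    have := CStarRing.norm_star_mul_self (x := P)
    rw [hsa.star_eq, hp] at this
    exact this.symm
  have : ‖P‖ ≤ 1 := by nlinarith [norm_nonneg P, sq_nonneg (‖P‖ - 1)]
  exact_mod_cast this

theorem key (b : HilbertBasis ℕ ℂ H) (A0 A : H →L[ℂ] H)
    (hV : Summable fun i => ‖(A - A0) (b i)‖ ^ 2) (P0 P : ℕ → H →L[ℂ] H)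
    (hP0proj : ∀ N, P0 N * P0 N = P0 N) (hP0sa : ∀ N, IsSelfAdjoint (P0 N))
    (hP0fin : ∀ N, FiniteDimensional ℂ (LinearMap.range (P0 N : H →ₗ[ℂ] H)))
    (hPproj : ∀ N, P N * P N = P N) (hPsa : ∀ N, IsSelfAdjoint (P N))
    (hPfin : ∀ N, FiniteDimensional ℂ (LinearMap.range (P N : H →ₗ[ℂ] H)))
    (h0 : Tendsto (fun N => schattenNorm b 2 (A0 * P0 N - P0 N * A0)) atTop (𝓝 0))
    (h1 : Tendsto (fun N => schattenNorm b 2 (A * P N - P N * A)) atTop (𝓝 0)) (k : ℕ) :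
    ∃ C : ℝ, ∀ N,
      schattenNorm b 2 (P0 N * ((P0 N * A0 * P0 N) ^ k - (P N * A * P N) ^ k) * P N) ≤ C := by
  have n0 : ∀ N, ‖P0 N‖₊ ≤ 1 := fun N => proj_norm (hP0proj N) (hP0sa N)
  have n1 : ∀ N, ‖P N‖₊ ≤ 1 := fun N => proj_norm (hPproj N) (hPsa N)
  have comp : ∀ (Q B : H →L[ℂ] H), ‖Q‖₊ ≤ 1 → ‖Q * B * Q‖₊ ≤ ‖B‖₊ := by
    intro Q B hQ
    calc ‖Q * B * Q‖₊ ≤ ‖Q‖₊ * ‖B‖₊ * ‖Q‖₊ := by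
          refine (nnnorm_mul_le _ _).trans ?_
          gcongr
          exact nnnorm_mul_le _ _
      _ ≤ 1 * ‖B‖₊ * 1 := by gcongr
      _ = _ := by simp
  have hVB : HSB b (fun _ => A0 - A) := by
    refine ⟨(hsq b (A0 - A)).toNNReal, fun _ => ?_⟩
    rw [ENNReal.coe_toNNReal]
    rw [← neg_sub A A0, hsq_neg]
    unfold hsq
    simp_rw [← ofReal_norm, ← ENNReal.ofReal_pow (norm_nonneg _)]
    exact hV.tsum_ofReal_ne_top
  have hD : HSB b (fun N => P0 N * (P0 N * A0 * P0 N - P N * A * P N) * P N) := by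
    have := HSB.mul_right n1 (HSB.mul_left n0
      ((hVB.add (HSB.comm hP0sa hP0fin h0)).add (HSB.comm hPsa hPfin h1)))
    convert this using 2 with N
    have e0 := hP0proj N
    have e1 := hPproj N
    have : P0 N * (P0 N * A0 * P0 N - P N * A * P N) * P N =
      (P0 N * P0 N) * A0 * P0 N * P N - P0 N * P N * A * (P N * P N) := by noncomm_ring
    rw [this, e0, e1]
    have : P0 N * (A0 - A + (A0 * P0 N - P0 N * A0) + (A * P N - P N * A)) * P N =
      P0 N * A0 * P N - P0 N * A * P N + P0 N * A0 * P0 N * P N - (P0 N * P0 N) * A0 * P N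
       + P0 N * A * (P N * P N) - P0 N * P N * A * P N := by noncomm_ring
    rw [this, e0, e1]
    abel
  have nb : ∀ (k N : ℕ), ‖(P N * A * P N) ^ k‖₊ ≤ ‖A‖₊ ^ k * ‖(1 : H →L[ℂ] H)‖₊ := by
    intro k N
    induction k with
    | zero => simp
    | succ k ih =>
      have hc := comp (P N) A (n1 N)
      generalize P N * A * P N = Y at ih hc ⊢
      rw [pow_succ' Y, pow_succ' ‖A‖₊, mul_assoc ‖A‖₊]
      exact (nnnorm_mul_le _ _).trans (mul_le_mul' hc ih)
  have main : HSB b (fun N => P0 N * ((P0 N * A0 * P0 N) ^ k - (P N * A * P N) ^ k) * P N) := by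
    induction k with
    | zero => exact ⟨0, fun N => by simp [hsq]⟩
    | succ k ih =>
      have := (HSB.mul_left (fun N => comp _ A0 (n0 N)) ih).add (HSB.mul_right (nb k) hD)
      convert this using 2 with N
      generalize hX : P0 N * A0 * P0 N = X
      generalize hY : P N * A * P N = Y
      have c0 : X * P0 N = P0 N * X := by
        rw [← hX]
        simp only [mul_assoc, hP0proj]
        simp only [← mul_assoc, hP0proj]
      have c1 : Commute Y (P N) := by
        rw [← hY]
        show _ * _ = _ * _
        simp only [mul_assoc, hPproj]
        simp only [← mul_assoc, hPproj]
      have c2 := (c1.pow_left k).eq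
      have l : X * (P0 N * (X ^ k - Y ^ k) * P N) = P0 N * X * (X ^ k - Y ^ k) * P N := by
        rw [← c0]; noncomm_ring
      have r : P0 N * (X - Y) * P N * Y ^ k = P0 N * (X - Y) * Y ^ k * P N := by
        rw [mul_assoc _ (P N), ← c2, mul_assoc, mul_assoc, mul_assoc]
      rw [l, r, pow_succ', pow_succ']
      noncomm_ring
  obtain ⟨C, hC⟩ := main
  refine ⟨Real.sqrt C, fun N => ?_⟩
  rw [schatten_two]
  exact Real.sqrt_le_sqrt (ENNReal.toReal_le_coe_of_le_coe (hC N))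

end helpers

/-- Under the same hypotheses, for `j = 1,2` and every `k ≥ 1` the
quantities `‖P_N⁰[(P_N⁰H_j⁰P_N⁰)^k − (P_N H_j P_N)^k]P_N‖₂` are uniformly bounded in `N`. -/
theorem stmt15
 {H : Type*} [NormedAddCommGroup H] [InnerProductSpace ℂ H] [CompleteSpace H]
    [TopologicalSpace.SeparableSpace H]
    (b : HilbertBasis ℕ ℂ H)
    (H10 H20 H1 H2 : H →L[ℂ] H)
    (h10sa : IsSelfAdjoint H10) (h20sa : IsSelfAdjoint H20)
    (h1sa : IsSelfAdjoint H1) (h2sa : IsSelfAdjoint H2)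
    (hcomm0 : Commute H10 H20) (hcomm : Commute H1 H2)
    (hV1 : Summable fun i => ‖(H1 - H10) (b i)‖ ^ 2)
    (hV2 : Summable fun i => ‖(H2 - H20) (b i)‖ ^ 2)
    (P0 P : ℕ → H →L[ℂ] H)
    (hP0proj : ∀ N, P0 N * P0 N = P0 N) (hP0sa : ∀ N, IsSelfAdjoint (P0 N))
    (hP0fin : ∀ N, FiniteDimensional ℂ (LinearMap.range (P0 N : H →ₗ[ℂ] H)))
    (hP0mono : ∀ N, LinearMap.range (P0 N : H →ₗ[ℂ] H)
      ≤ LinearMap.range (P0 (N + 1) : H →ₗ[ℂ] H))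
    (hP0lim : ∀ x : H, Tendsto (fun N => P0 N x) atTop (𝓝 x))
    (hPproj : ∀ N, P N * P N = P N) (hPsa : ∀ N, IsSelfAdjoint (P N))
    (hPfin : ∀ N, FiniteDimensional ℂ (LinearMap.range (P N : H →ₗ[ℂ] H)))
    (hPmono : ∀ N, LinearMap.range (P N : H →ₗ[ℂ] H)
      ≤ LinearMap.range (P (N + 1) : H →ₗ[ℂ] H))
    (hPlim : ∀ x : H, Tendsto (fun N => P N x) atTop (𝓝 x))
    (H10N H20N H1N H2N : ℕ → H →L[ℂ] H)
    (h10Nsa : ∀ N, IsSelfAdjoint (H10N N)) (h20Nsa : ∀ N, IsSelfAdjoint (H20N N))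
    (h1Nsa : ∀ N, IsSelfAdjoint (H1N N)) (h2Nsa : ∀ N, IsSelfAdjoint (H2N N))
    (hcomm0N : ∀ N, Commute (H10N N) (H20N N)) (hcommN : ∀ N, Commute (H1N N) (H2N N))
    (hsub0 : ∀ N, P0 N * H10N N * P0 N = H10N N * P0 N
      ∧ P0 N * H20N N * P0 N = H20N N * P0 N)
    (hsub : ∀ N, P N * H1N N * P N = H1N N * P N ∧ P N * H2N N * P N = H2N N * P N)
    (happrox0 : ∀ p : ℝ, 2 ≤ p →
      Tendsto (fun N => schattenNorm b p (H10 * P0 N - P0 N * H10)) atTop (𝓝 0) ∧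
      Tendsto (fun N => schattenNorm b p (H20 * P0 N - P0 N * H20)) atTop (𝓝 0) ∧
      Tendsto (fun N => schattenNorm b p (P0 N * H10 * P0 N - H10N N * P0 N)) atTop (𝓝 0) ∧
      Tendsto (fun N => schattenNorm b p (P0 N * H20 * P0 N - H20N N * P0 N)) atTop (𝓝 0))
    (happrox : ∀ p : ℝ, 2 ≤ p →
      Tendsto (fun N => schattenNorm b p (H1 * P N - P N * H1)) atTop (𝓝 0) ∧
      Tendsto (fun N => schattenNorm b p (H2 * P N - P N * H2)) atTop (𝓝 0) ∧
      Tendsto (fun N => schattenNorm b p (P N * H1 * P N - H1N N * P N)) atTop (𝓝 0) ∧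
      Tendsto (fun N => schattenNorm b p (P N * H2 * P N - H2N N * P N)) atTop (𝓝 0))
    : ∀ k : ℕ, 1 ≤ k → ∃ C : ℝ, ∀ N,
      schattenNorm b 2 (P0 N * ((P0 N * H10 * P0 N) ^ k - (P N * H1 * P N) ^ k) * P N)
        ≤ C ∧
      schattenNorm b 2 (P0 N * ((P0 N * H20 * P0 N) ^ k - (P N * H2 * P N) ^ k) * P N)
        ≤ C := by
  intro k _
  obtain ⟨C, hC⟩ := key b H10 H1 hV1 P0 P hP0proj hP0sa hP0fin hPproj hPsa hPfin
    (happrox0 2 le_rfl).1 (happrox 2 le_rfl).1 k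
  obtain ⟨D, hD⟩ := key b H20 H2 hV2 P0 P hP0proj hP0sa hP0fin hPproj hPsa hPfin
    (happrox0 2 le_rfl).2.1 (happrox 2 le_rfl).2.1 k
  exact ⟨max C D, fun N => ⟨(hC N).trans (le_max_left _ _), (hD N).trans (le_max_right _ _)⟩⟩

end
end
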